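/- arXiv:2508.00887 — 4 statements merged into one kernel-verified Lean document; each statement's English description precedes it below -/
import Mathlib

section
/- Let n ≥ 1, let X be a real n×n matrix with nonnegative entries and let θ > 0. Suppose D^∞ maximizes ⟨D, X⟩ over the set of n×n doubly stochastic matrices and D^θ maximizes Γ^θ_X(D) = ⟨D, X⟩ − (1/θ)⟨D, D⟩ over the set of n×n doubly stochastic matrices. Then the normalized assignment error ε^θ_X = (1/n)(⟨D^∞, X⟩ − ⟨D^θ, X⟩) satisfies ε^θ_X ≤ 1/θ. -/
open Finset

def IsDoublyStochastic {n : ℕ} (D : Matrix (Fin n) (Fin n) ℝ) : Prop :=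
  (∀ i j, 0 ≤ D i j) ∧ (∀ i, ∑ j, D i j = 1) ∧ (∀ j, ∑ i, D i j = 1)

noncomputable def finner {n : ℕ} (A B : Matrix (Fin n) (Fin n) ℝ) : ℝ :=
  ∑ i, ∑ j, A i j * B i j

noncomputable def fnorm {n : ℕ} (A : Matrix (Fin n) (Fin n) ℝ) : ℝ :=
  Real.sqrt (finner A A)

noncomputable def Gamma {n : ℕ} (θ : ℝ) (X D : Matrix (Fin n) (Fin n) ℝ) : ℝ :=
  finner D X - (1 / θ) * finner D D

/-!
Comparing the regularized objective at `D^θ` with its value at `D^∞` bounds the loss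
`⟨D^∞, X⟩ − ⟨D^θ, X⟩` by `(1/θ)(⟨D^∞, D^∞⟩ − ⟨D^θ, D^θ⟩)`. The subtracted square is nonnegative,
while the entries of a row-stochastic matrix lie in `[0, 1]`, so each row contributes at most its
sum `1` to `⟨D^∞, D^∞⟩`.
-/

theorem sum_mul_self_le_card_of_mem_rowStochastic {R m : Type*} [Fintype m] [DecidableEq m]
    [Semiring R] [PartialOrder R] [IsOrderedRing R] {M : Matrix m m R}
    (hM : M ∈ Matrix.rowStochastic R m) :
    ∑ i, ∑ j, M i j * M i j ≤ Fintype.card m :=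
  calc ∑ i, ∑ j, M i j * M i j
      ≤ ∑ i, ∑ j, M i j := by
        gcongr
        exact mul_le_of_le_one_left (Matrix.nonneg_of_mem_rowStochastic hM)
          (Matrix.le_one_of_mem_rowStochastic hM)
    _ = ∑ _i : m, (1 : R) :=
        sum_congr rfl fun i _ => Matrix.sum_row_of_mem_rowStochastic hM i
    _ = Fintype.card m := by simp

section Frobenius

variable {n : ℕ} {θ : ℝ} {X D E : Matrix (Fin n) (Fin n) ℝ}

theorem IsDoublyStochastic.mem_rowStochastic (hD : IsDoublyStochastic D) :
    D ∈ Matrix.rowStochastic ℝ (Fin n) :=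
  Matrix.mem_rowStochastic_iff_sum.2 ⟨hD.1, hD.2.1⟩

theorem finner_self_nonneg (A : Matrix (Fin n) (Fin n) ℝ) : 0 ≤ finner A A :=
  sum_nonneg fun _ _ => sum_nonneg fun _ _ => mul_self_nonneg _

theorem finner_self_le_of_mem_rowStochastic (hD : D ∈ Matrix.rowStochastic ℝ (Fin n)) :
    finner D D ≤ n := by
  simpa only [finner, Fintype.card_fin] using sum_mul_self_le_card_of_mem_rowStochastic hD

theorem finner_sub_finner_le_of_Gamma_le (h : Gamma θ X D ≤ Gamma θ X E) :
    finner D X - finner E X ≤ 1 / θ * (finner D D - finner E E) := by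
  unfold Gamma at h
  linarith

theorem stmt_1_general (hn : 1 ≤ n) (hθ : 0 < θ) (hD : D ∈ Matrix.rowStochastic ℝ (Fin n))
    (h : Gamma θ X D ≤ Gamma θ X E) :
    1 / (n : ℝ) * (finner D X - finner E X) ≤ 1 / θ := by
  have hn_pos : (0 : ℝ) < n := Nat.cast_pos.2 hn
  have finner_gap_le : finner D D - finner E E ≤ n :=
    (sub_le_self _ (finner_self_nonneg E)).trans (finner_self_le_of_mem_rowStochastic hD)
  rw [one_div_mul_eq_div, div_le_iff₀ hn_pos]
  calc finner D X - finner E X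
      ≤ 1 / θ * (finner D D - finner E E) := finner_sub_finner_le_of_Gamma_le h
    _ ≤ 1 / θ * n := by gcongr

end Frobenius

/-- the normalized assignment error ε^θ_X = (1/n)(⟨D^∞, X⟩ − ⟨D^θ, X⟩)
is at most 1/θ. -/
theorem stmt_1 (n : ℕ) (hn : 1 ≤ n) (X : Matrix (Fin n) (Fin n) ℝ)
    (hX : ∀ i j, 0 ≤ X i j) (θ : ℝ) (hθ : 0 < θ)
    (Dinf Dθ : Matrix (Fin n) (Fin n) ℝ)
    (hDinf : IsDoublyStochastic Dinf)
    (hDinfMax : ∀ E : Matrix (Fin n) (Fin n) ℝ, IsDoublyStochastic E →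
      finner E X ≤ finner Dinf X)
    (hDθ : IsDoublyStochastic Dθ)
    (hDθMax : ∀ E : Matrix (Fin n) (Fin n) ℝ, IsDoublyStochastic E →
      Gamma θ X E ≤ Gamma θ X Dθ) :
    (1 / (n : ℝ)) * (finner Dinf X - finner Dθ X) ≤ 1 / θ :=
  stmt_1_general hn hθ hDinf.mem_rowStochastic (hDθMax Dinf hDinf)
end

section
/- Let n ≥ 1, let X be a real n×n matrix with nonnegative entries and let θ > 0. Suppose D^∞ maximizes ⟨D, X⟩ over the set of n×n doubly stochastic matrices and D^θ maximizes Γ^θ_X(D) = ⟨D, X⟩ − (1/θ)⟨D, D⟩ over the set of n×n doubly stochastic matrices. Then ⟨D^∞, X⟩ − ⟨D^θ, X⟩ ≤ (1/θ)(n − ⟨D^θ, D^θ⟩), and consequently ⟨D^∞, X⟩ − ⟨D^θ, X⟩ ≤ (n − 1)/θ. -/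
open Finset

/-!
Comparing the regularized objective at `Dθ` and at a competitor `D` bounds the loss in the linear
part by `1 / θ` times the difference of the squared Frobenius norms. For a matrix whose rows lie in
the probability simplex, the squared norm of each row is between `1 / n` and `1`, the lower bound
being Cauchy–Schwarz against the all-ones vector; summing over the rows, the squared Frobenius norm
lies between `1` and `n`.
-/

section RowSums

variable {ι κ R : Type*} [Fintype ι] [Fintype κ]

theorem sum_sq_le_card_of_sum_row_eq_one [Semiring R] [PartialOrder R] [IsOrderedRing R]
    {A : Matrix ι κ R} (hA : ∀ i j, 0 ≤ A i j) (hrow : ∀ i, ∑ j, A i j = 1) :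
    ∑ i, ∑ j, A i j ^ 2 ≤ Fintype.card ι :=
  calc ∑ i, ∑ j, A i j ^ 2
      ≤ ∑ i, (∑ j, A i j) ^ 2 :=
        sum_le_sum fun i _ ↦ sum_sq_le_sq_sum_of_nonneg fun j _ ↦ hA i j
    _ = Fintype.card ι := by simp [hrow]

theorem card_le_card_mul_sum_sq_of_sum_row_eq_one [Ring R] [LinearOrder R] [IsStrictOrderedRing R]
    {A : Matrix ι κ R} (hrow : ∀ i, ∑ j, A i j = 1) :
    (Fintype.card ι : R) ≤ Fintype.card κ * ∑ i, ∑ j, A i j ^ 2 :=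
  calc (Fintype.card ι : R)
      = ∑ i, (∑ j, A i j) ^ 2 := by simp [hrow]
    _ ≤ ∑ i, Fintype.card κ * ∑ j, A i j ^ 2 := sum_le_sum fun _ _ ↦ sq_sum_le_card_mul_sum_sq
    _ = Fintype.card κ * ∑ i, ∑ j, A i j ^ 2 := (mul_sum ..).symm

end RowSums

section Frobenius

variable {n : ℕ} {A : Matrix (Fin n) (Fin n) ℝ}

theorem finner_self_eq_sum_sq (A : Matrix (Fin n) (Fin n) ℝ) :
    finner A A = ∑ i, ∑ j, A i j ^ 2 := by
  simp only [finner, sq]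

theorem finner_self_le_of_sum_row_eq_one (hA : ∀ i j, 0 ≤ A i j) (hrow : ∀ i, ∑ j, A i j = 1) :
    finner A A ≤ n := by
  simpa [finner_self_eq_sum_sq] using sum_sq_le_card_of_sum_row_eq_one hA hrow

theorem one_le_finner_self_of_sum_row_eq_one (hn : 1 ≤ n) (hrow : ∀ i, ∑ j, A i j = 1) :
    1 ≤ finner A A := by
  have hn_pos : (0 : ℝ) < n := by exact_mod_cast hn
  have hcard : (n : ℝ) ≤ n * finner A A := by
    simpa [finner_self_eq_sum_sq] using card_le_card_mul_sum_sq_of_sum_row_eq_one hrow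
  exact (le_mul_iff_one_le_right hn_pos).mp hcard

theorem Gamma_le_Gamma_iff {θ : ℝ} {X D E : Matrix (Fin n) (Fin n) ℝ} :
    Gamma θ X D ≤ Gamma θ X E ↔
      finner D X - finner E X ≤ 1 / θ * (finner D D - finner E E) := by
  rw [Gamma, Gamma, mul_sub]
  constructor <;> intro h <;> linarith

end Frobenius

theorem stmt_2_general {n : ℕ} (hn : 1 ≤ n) {X : Matrix (Fin n) (Fin n) ℝ} {θ : ℝ} (hθ : 0 < θ)
    {D Dθ : Matrix (Fin n) (Fin n) ℝ} (hD : ∀ i j, 0 ≤ D i j) (hDrow : ∀ i, ∑ j, D i j = 1)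
    (hDθrow : ∀ i, ∑ j, Dθ i j = 1) (hle : Gamma θ X D ≤ Gamma θ X Dθ) :
    finner D X - finner Dθ X ≤ (1 / θ) * ((n : ℝ) - finner Dθ Dθ) ∧
      finner D X - finner Dθ X ≤ ((n : ℝ) - 1) / θ := by
  have hbound : finner D X - finner Dθ X ≤ (1 / θ) * ((n : ℝ) - finner Dθ Dθ) :=
    calc finner D X - finner Dθ X
        ≤ (1 / θ) * (finner D D - finner Dθ Dθ) := Gamma_le_Gamma_iff.mp hle
      _ ≤ (1 / θ) * ((n : ℝ) - finner Dθ Dθ) := by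
        gcongr
        exact finner_self_le_of_sum_row_eq_one hD hDrow
  refine ⟨hbound, hbound.trans ?_⟩
  calc (1 / θ) * ((n : ℝ) - finner Dθ Dθ)
      ≤ (1 / θ) * ((n : ℝ) - 1) := by
        gcongr
        exact one_le_finner_self_of_sum_row_eq_one hn hDθrow
    _ = ((n : ℝ) - 1) / θ := one_div_mul_eq_div _ _

/-- ⟨D^∞, X⟩ − ⟨D^θ, X⟩ ≤ (1/θ)(n − ⟨D^θ, D^θ⟩), and consequently
⟨D^∞, X⟩ − ⟨D^θ, X⟩ ≤ (n − 1)/θ. -/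
theorem stmt_2 (n : ℕ) (hn : 1 ≤ n) (X : Matrix (Fin n) (Fin n) ℝ)
    (hX : ∀ i j, 0 ≤ X i j) (θ : ℝ) (hθ : 0 < θ)
    (Dinf Dθ : Matrix (Fin n) (Fin n) ℝ)
    (hDinf : IsDoublyStochastic Dinf)
    (hDinfMax : ∀ E : Matrix (Fin n) (Fin n) ℝ, IsDoublyStochastic E →
      finner E X ≤ finner Dinf X)
    (hDθ : IsDoublyStochastic Dθ)
    (hDθMax : ∀ E : Matrix (Fin n) (Fin n) ℝ, IsDoublyStochastic E →
      Gamma θ X E ≤ Gamma θ X Dθ) :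
    finner Dinf X - finner Dθ X ≤ (1 / θ) * ((n : ℝ) - finner Dθ Dθ) ∧
      finner Dinf X - finner Dθ X ≤ ((n : ℝ) - 1) / θ :=
  stmt_2_general hn hθ hDinf.1 hDinf.2.1 hDθ.2.1 (hDθMax Dinf hDinf)
end

section
/- Let n ≥ 1 and let X be a real n×n matrix. Let 𝓕 denote the set of doubly stochastic matrices that maximize ⟨D, X⟩ over all n×n doubly stochastic matrices, and let D* be the unique element of 𝓕 minimizing ⟨D, D⟩ over 𝓕. For each θ > 0 let D^θ_X be the unique maximizer of Γ^θ_X(D) = ⟨D, X⟩ − (1/θ)⟨D, D⟩ over the n×n doubly stochastic matrices. Then D^θ_X converges to D* as θ → ∞ (entrywise, equivalently in Frobenius norm). -/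
open Finset

/-!
Comparing `D^θ_X` with `D*`, where `⟨·, X⟩` is at least as large, shows
`⟨D^θ_X, D^θ_X⟩ ≤ ⟨D*, D*⟩`. Letting `1 / θ → 0` in the optimality of `D^θ_X` shows that every
cluster point of `D^θ_X` maximizes `⟨·, X⟩`. So every cluster point lies in `𝓕` and has squared norm
at most that of `D*`, hence equals `D*`, and compactness turns this into convergence.
-/

open Filter Topology

theorem isMaxOn_of_forall_ne_lt {α β : Type*} [Preorder β] {f : α → β} {s : Set α} {a : α}
    (h : ∀ b ∈ s, b ≠ a → f b < f a) : IsMaxOn f s a := by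
  intro b hb
  rcases eq_or_ne b a with rfl | hne
  · exact le_refl (f b)
  · exact (h b hb hne).le

section PenalizedMaximizers

variable {ι E : Type*} {K : Set E} {f g : E → ℝ}

theorem penalty_le_of_isMaxOn_penalized {ε : ℝ} {x x₀ : E} (hε : 0 < ε)
    (hx : x ∈ K) (hx_max : IsMaxOn (fun y ↦ f y - ε * g y) K x)
    (hx₀ : x₀ ∈ K) (hx₀_max : IsMaxOn f K x₀) : g x ≤ g x₀ := by
  have hf : f x ≤ f x₀ := hx₀_max hx
  have hpen : f x₀ - ε * g x₀ ≤ f x - ε * g x := hx_max hx₀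
  exact le_of_mul_le_mul_left (by linarith) hε

variable [TopologicalSpace E] {l : Filter ι} {ε : ι → ℝ} {x : ι → E}

theorem isMaxOn_of_tendsto_penalized [l.NeBot] {y : E}
    (hf : ContinuousOn f K) (hg : ContinuousOn g K) (hε : Tendsto ε l (𝓝 0))
    (hxK : ∀ᶠ i in l, x i ∈ K) (hx_max : ∀ᶠ i in l, IsMaxOn (fun z ↦ f z - ε i * g z) K (x i))
    (hyK : y ∈ K) (hxy : Tendsto x l (𝓝 y)) : IsMaxOn f K y := by
  intro z hz
  have hxy' : Tendsto x l (𝓝[K] y) := tendsto_nhdsWithin_iff.2 ⟨hxy, hxK⟩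
  have hlim_z : Tendsto (fun i ↦ f z - ε i * g z) l (𝓝 (f z)) := by
    simpa using (hε.mul_const (g z)).const_sub (f z)
  have hlim_x : Tendsto (fun i ↦ f (x i) - ε i * g (x i)) l (𝓝 (f y)) := by
    simpa using ((hf y hyK).tendsto.comp hxy').sub (hε.mul ((hg y hyK).tendsto.comp hxy'))
  exact le_of_tendsto_of_tendsto hlim_z hlim_x (hx_max.mono fun i hi ↦ hi hz)

theorem tendsto_of_isMaxOn_penalized {x₀ : E} (hK : IsCompact K)
    (hf : ContinuousOn f K) (hg : ContinuousOn g K)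
    (hε : Tendsto ε l (𝓝[>] 0))
    (hxK : ∀ᶠ i in l, x i ∈ K) (hx_max : ∀ᶠ i in l, IsMaxOn (fun z ↦ f z - ε i * g z) K (x i))
    (hx₀ : x₀ ∈ K) (hx₀_max : IsMaxOn f K x₀)
    (hx₀_unique : ∀ y ∈ K, IsMaxOn f K y → g y ≤ g x₀ → y = x₀) :
    Tendsto x l (𝓝 x₀) := by
  obtain ⟨hε_zero, hε_pos⟩ := tendsto_nhdsWithin_iff.1 hε
  have hpen : ∀ᶠ i in l, g (x i) ≤ g x₀ := by
    filter_upwards [hε_pos, hxK, hx_max] with i hpos hmem hmax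
    exact penalty_le_of_isMaxOn_penalized hpos hmem hmax hx₀ hx₀_max
  refine hK.tendsto_nhds_of_unique_mapClusterPt hxK fun y hyK hy ↦ ?_
  obtain ⟨U, hUl, hUy⟩ := mapClusterPt_iff_ultrafilter.1 hy
  have hUy' : Tendsto x U (𝓝[K] y) := tendsto_nhdsWithin_iff.2 ⟨hUy, hUl hxK⟩
  refine hx₀_unique y hyK ?_ ?_
  · exact isMaxOn_of_tendsto_penalized hf hg (hε_zero.mono_left hUl) (hUl hxK) (hUl hx_max) hyK hUy
  · exact le_of_tendsto ((hg y hyK).tendsto.comp hUy') (hUl hpen)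

end PenalizedMaximizers

section DoublyStochastic

variable {R ι : Type*} [Fintype ι] [DecidableEq ι] [Semiring R] [PartialOrder R] [IsOrderedRing R]

theorem mem_doublyStochastic_iff_mem_stdSimplex {D : Matrix ι ι R} :
    D ∈ doublyStochastic R ι ↔
      (∀ i, D i ∈ stdSimplex R ι) ∧ ∀ j, D.transpose j ∈ stdSimplex R ι := by
  rw [mem_doublyStochastic_iff_sum]
  exact ⟨fun ⟨hnonneg, hrow, hcol⟩ ↦
      ⟨fun i ↦ ⟨hnonneg i, hrow i⟩, fun j ↦ ⟨fun i ↦ hnonneg i j, hcol j⟩⟩,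
    fun ⟨hrow, hcol⟩ ↦ ⟨fun i ↦ (hrow i).1, fun i ↦ (hrow i).2, fun j ↦ (hcol j).2⟩⟩

variable (R ι) in
theorem isCompact_doublyStochastic [TopologicalSpace R] [OrderClosedTopology R] [ContinuousAdd R]
    [CompactIccSpace R] : IsCompact (doublyStochastic R ι : Set (Matrix ι ι R)) := by
  let rowSimplices : Set (Matrix ι ι R) := Set.univ.pi fun _ ↦ stdSimplex R ι
  have hcompact : IsCompact rowSimplices := isCompact_univ_pi fun _ ↦ isCompact_stdSimplex R ι
  have hclosed : IsClosed rowSimplices := isClosed_set_pi fun _ _ ↦ isClosed_stdSimplex R ι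
  have heq : (doublyStochastic R ι : Set (Matrix ι ι R)) =
      rowSimplices ∩ Matrix.transpose ⁻¹' rowSimplices := by
    ext D
    exact mem_doublyStochastic_iff_mem_stdSimplex.trans
      (and_congr Set.mem_univ_pi.symm Set.mem_univ_pi.symm)
  rw [heq]
  exact hcompact.inter_right (hclosed.preimage continuous_id.matrix_transpose)

end DoublyStochastic

theorem setOf_isDoublyStochastic (n : ℕ) :
    {D : Matrix (Fin n) (Fin n) ℝ | IsDoublyStochastic D} = doublyStochastic ℝ (Fin n) := by
  ext D
  exact mem_doublyStochastic_iff_sum.symm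

theorem continuous_finner {n : ℕ} {T : Type*} [TopologicalSpace T]
    {A B : T → Matrix (Fin n) (Fin n) ℝ} (hA : Continuous A) (hB : Continuous B) :
    Continuous fun t ↦ finner (A t) (B t) :=
  continuous_finsetSum _ fun i _ ↦ continuous_finsetSum _ fun j _ ↦
    (hA.matrix_elem i j).mul (hB.matrix_elem i j)

/-- as θ → ∞, the unique maximizer D^θ_X of Γ^θ_X over the doubly
stochastic matrices converges to D*, the unique minimizer of ⟨D, D⟩ over the set 𝓕
of maximizers of ⟨D, X⟩ over the doubly stochastic matrices. -/
theorem stmt_3 (n : ℕ) (hn : 1 ≤ n) (X : Matrix (Fin n) (Fin n) ℝ)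
    (F : Set (Matrix (Fin n) (Fin n) ℝ))
    (hF : F = {D | IsDoublyStochastic D ∧
      ∀ E : Matrix (Fin n) (Fin n) ℝ, IsDoublyStochastic E → finner E X ≤ finner D X})
    (Dstar : Matrix (Fin n) (Fin n) ℝ)
    (hDstarMem : Dstar ∈ F)
    (hDstarMin : ∀ E ∈ F, E ≠ Dstar → finner Dstar Dstar < finner E E)
    (Dθ : ℝ → Matrix (Fin n) (Fin n) ℝ)
    (hDθ : ∀ θ : ℝ, 0 < θ → IsDoublyStochastic (Dθ θ) ∧
      ∀ E : Matrix (Fin n) (Fin n) ℝ, IsDoublyStochastic E → E ≠ Dθ θ →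
        Gamma θ X E < Gamma θ X (Dθ θ)) :
    Filter.Tendsto Dθ Filter.atTop (nhds Dstar) := by
  subst hF
  obtain ⟨hDstar, hDstarMax⟩ := hDstarMem
  have hcompact : IsCompact {D : Matrix (Fin n) (Fin n) ℝ | IsDoublyStochastic D} :=
    setOf_isDoublyStochastic n ▸ isCompact_doublyStochastic ℝ (Fin n)
  have hscale : Tendsto (fun θ : ℝ ↦ 1 / θ) atTop (𝓝[>] 0) := by
    simpa only [one_div] using tendsto_inv_atTop_nhdsGT_zero (𝕜 := ℝ)
  have hpos : ∀ᶠ θ : ℝ in atTop, 0 < θ := eventually_gt_atTop 0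
  refine tendsto_of_isMaxOn_penalized (f := (finner · X)) (g := fun D ↦ finner D D) hcompact
    (continuous_finner continuous_id continuous_const).continuousOn
    (continuous_finner continuous_id continuous_id).continuousOn hscale
    (hpos.mono fun θ hθ ↦ (hDθ θ hθ).1)
    (hpos.mono fun θ hθ ↦ isMaxOn_of_forall_ne_lt (hDθ θ hθ).2)
    hDstar hDstarMax fun D hD hDMax hDle ↦ ?_
  by_contra hne
  exact (hDstarMin D ⟨hD, hDMax⟩ hne).not_ge hDle
end

section
/- Let n ≥ 1 and let X be a real n×n matrix. For each θ > 0 let D^θ_X be the unique maximizer of Γ^θ_X(D) = ⟨D, X⟩ − (1/θ)⟨D, D⟩ over the n×n doubly stochastic matrices. Then as θ → 0⁺, D^θ_X converges to the matrix (1/n)·𝟙𝟙ᵀ, i.e., the n×n matrix all of whose entries equal 1/n. -/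
open Finset

/-!
Write `J` for the matrix with all entries `1 / n`. Every matrix `D` whose entries sum to `n`
satisfies `⟨D - J, J⟩ = 0`, so `‖D‖² = ‖J‖² + ‖D - J‖²`. If moreover `Γ^θ_X(J) ≤ Γ^θ_X(D)`, then
`(1/θ) ‖D - J‖² ≤ ⟨D - J, X⟩ ≤ ‖D - J‖ ‖X‖` by Cauchy–Schwarz, that is `‖D - J‖ ≤ θ ‖X‖`.
-/

open Filter Topology
open scoped RealInnerProductSpace

theorem apply_le_apply_of_ne_imp_lt {α β : Type*} [Preorder β] {f : α → β} {a b : α}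
    (h : a ≠ b → f a < f b) : f a ≤ f b :=
  (eq_or_ne a b).elim (fun heq => (congrArg f heq).le) fun hne => (h hne).le

theorem mul_norm_sub_le_norm_of_regularized_le {E : Type*} [NormedAddCommGroup E]
    [InnerProductSpace ℝ E] {x c d : E} {r : ℝ} (horth : ⟪d - c, c⟫ = 0)
    (hle : ⟪c, x⟫ - r * ⟪c, c⟫ ≤ ⟪d, x⟫ - r * ⟪d, d⟫) :
    r * ‖d - c‖ ≤ ‖x‖ := by
  have pythagoras : ⟪d, d⟫ = ⟪d - c, d - c⟫ + ⟪c, c⟫ := by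
    simpa [horth] using real_inner_add_add_self (d - c) c
  have hsq : (r * ‖d - c‖) * ‖d - c‖ ≤ ‖x‖ * ‖d - c‖ := calc
    (r * ‖d - c‖) * ‖d - c‖ = r * ⟪d - c, d - c⟫ := by
      rw [real_inner_self_eq_norm_mul_norm, mul_assoc]
    _ ≤ ⟪d - c, x⟫ := by
      rw [pythagoras] at hle
      rw [inner_sub_left d c x]
      linarith
    _ ≤ ‖x‖ * ‖d - c‖ := (real_inner_le_norm _ _).trans_eq (mul_comm _ _)
  rcases (norm_nonneg (d - c)).eq_or_lt with hzero | hpos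
  · simp [← hzero]
  · exact le_of_mul_le_mul_right hsq hpos

section Frobenius

variable {n : ℕ}

/-- The entries of a matrix as a vector of the Euclidean space indexed by pairs. It carries
`finner` and `fnorm` to the inner product and the norm. -/
def matrixToEuclidean : Matrix (Fin n) (Fin n) ℝ →ₗ[ℝ] EuclideanSpace ℝ (Fin n × Fin n) where
  toFun A := WithLp.toLp 2 fun p => A p.1 p.2
  map_add' _ _ := rfl
  map_smul' _ _ := rfl

theorem inner_matrixToEuclidean (A B : Matrix (Fin n) (Fin n) ℝ) :
    ⟪matrixToEuclidean A, matrixToEuclidean B⟫ = finner A B := by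
  simp only [PiLp.inner_apply, Fintype.sum_prod_type, Real.inner_apply, finner]
  rfl

theorem norm_matrixToEuclidean (A : Matrix (Fin n) (Fin n) ℝ) :
    ‖matrixToEuclidean A‖ = fnorm A := by
  rw [norm_eq_sqrt_real_inner, inner_matrixToEuclidean, fnorm]

theorem abs_apply_le_fnorm (A : Matrix (Fin n) (Fin n) ℝ) (i j : Fin n) :
    |A i j| ≤ fnorm A :=
  (PiLp.norm_apply_le (matrixToEuclidean A) (i, j)).trans_eq (norm_matrixToEuclidean A)

theorem tendsto_of_fnorm_sub_tendsto_zero {ι : Type*} {l : Filter ι}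
    {A : ι → Matrix (Fin n) (Fin n) ℝ} {B : Matrix (Fin n) (Fin n) ℝ}
    (h : Tendsto (fun k => fnorm (A k - B)) l (𝓝 0)) : Tendsto A l (𝓝 B) := by
  refine tendsto_pi_nhds.2 fun i => tendsto_pi_nhds.2 fun j => ?_
  rw [tendsto_iff_norm_sub_tendsto_zero]
  exact squeeze_zero (fun _ => norm_nonneg _) (fun k => abs_apply_le_fnorm (A k - B) i j) h

theorem fnorm_sub_le_of_Gamma_le {θ : ℝ} (hθ : 0 < θ) {X C D : Matrix (Fin n) (Fin n) ℝ}
    (horth : finner (D - C) C = 0) (hle : Gamma θ X C ≤ Gamma θ X D) :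
    fnorm (D - C) ≤ θ * fnorm X := by
  have hscaled : 1 / θ * fnorm (D - C) ≤ fnorm X := by
    simp only [Gamma, ← inner_matrixToEuclidean, ← norm_matrixToEuclidean, map_sub] at horth hle ⊢
    exact mul_norm_sub_le_norm_of_regularized_le horth hle
  rwa [one_div, inv_mul_le_iff₀ hθ] at hscaled

end Frobenius

section UniformMatrix

/-- The matrix `(1/n)·𝟙𝟙ᵀ`, the barycenter of the polytope of doubly stochastic matrices. -/
noncomputable def uniformMatrix (n : ℕ) : Matrix (Fin n) (Fin n) ℝ :=
  Matrix.of fun _ _ => 1 / n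

variable {n : ℕ}

theorem isDoublyStochastic_uniformMatrix : IsDoublyStochastic (uniformMatrix n) := by
  have sum_inv (i : Fin n) : ∑ _j : Fin n, (1 : ℝ) / n = 1 := by
    have : NeZero n := i.neZero
    simp
  exact ⟨fun _ _ => one_div_nonneg.2 n.cast_nonneg, sum_inv, sum_inv⟩

theorem sum_sum_eq_of_isDoublyStochastic {D : Matrix (Fin n) (Fin n) ℝ}
    (hD : IsDoublyStochastic D) : ∑ i, ∑ j, D i j = n := by
  simp [hD.2.1]

theorem finner_uniformMatrix_right (A : Matrix (Fin n) (Fin n) ℝ) :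
    finner A (uniformMatrix n) = (∑ i, ∑ j, A i j) * (1 / n) := by
  simp only [finner, uniformMatrix, Matrix.of_apply, Finset.sum_mul]

theorem finner_sub_uniformMatrix_eq_zero {D : Matrix (Fin n) (Fin n) ℝ}
    (hD : ∑ i, ∑ j, D i j = n) : finner (D - uniformMatrix n) (uniformMatrix n) = 0 := by
  simp only [finner_uniformMatrix_right, Matrix.sub_apply, Finset.sum_sub_distrib, hD,
    sum_sum_eq_of_isDoublyStochastic isDoublyStochastic_uniformMatrix, sub_self, zero_mul]

end UniformMatrix

theorem stmt_5_general {n : ℕ} {X : Matrix (Fin n) (Fin n) ℝ}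
    {D : ℝ → Matrix (Fin n) (Fin n) ℝ} (hsum : ∀ᶠ θ in 𝓝[>] 0, ∑ i, ∑ j, D θ i j = n)
    (hle : ∀ᶠ θ in 𝓝[>] 0, Gamma θ X (uniformMatrix n) ≤ Gamma θ X (D θ)) :
    Tendsto D (𝓝[>] 0) (𝓝 (uniformMatrix n)) := by
  have bound_tendsto : Tendsto (fun θ : ℝ => θ * fnorm X) (𝓝[>] 0) (𝓝 0) :=
    ((continuous_mul_const (fnorm X)).tendsto' 0 0 (zero_mul _)).mono_left nhdsWithin_le_nhds
  refine tendsto_of_fnorm_sub_tendsto_zero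
    (squeeze_zero' (.of_forall fun _ => Real.sqrt_nonneg _) ?_ bound_tendsto)
  filter_upwards [self_mem_nhdsWithin, hsum, hle] with θ hθ hsumθ hleθ
  exact fnorm_sub_le_of_Gamma_le hθ (finner_sub_uniformMatrix_eq_zero hsumθ) hleθ

/-- as θ → 0⁺, the unique maximizer D^θ_X of Γ^θ_X over the doubly
stochastic matrices converges to the matrix (1/n)·𝟙𝟙ᵀ, all of whose entries are 1/n. -/
theorem stmt_5 (n : ℕ) (hn : 1 ≤ n) (X : Matrix (Fin n) (Fin n) ℝ)
    (Dθ : ℝ → Matrix (Fin n) (Fin n) ℝ)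
    (hDθ : ∀ θ : ℝ, 0 < θ → IsDoublyStochastic (Dθ θ) ∧
      ∀ E : Matrix (Fin n) (Fin n) ℝ, IsDoublyStochastic E → E ≠ Dθ θ →
        Gamma θ X E < Gamma θ X (Dθ θ)) :
    Filter.Tendsto Dθ (nhdsWithin 0 (Set.Ioi 0))
      (nhds (Matrix.of fun _ _ => (1 : ℝ) / n)) :=
  stmt_5_general
    (eventually_mem_nhdsWithin.mono fun θ hθ => sum_sum_eq_of_isDoublyStochastic (hDθ θ hθ).1)
    (eventually_mem_nhdsWithin.mono fun θ hθ =>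
      apply_le_apply_of_ne_imp_lt ((hDθ θ hθ).2 _ isDoublyStochastic_uniformMatrix))
end
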